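/- arXiv:2107.13831 — 9 statements merged into one kernel-verified Lean document; each statement's English description precedes it below -/
import Mathlib

section
/- For every natural number n ≥ 2 there exists a simple graph on 2^⌊(n−2)/2⌋ vertices that contains neither an n-clique (a set of n pairwise adjacent vertices) nor an n-anticlique (a set of n pairwise non-adjacent vertices). Formally: there is a simple graph G on the vertex set Fin (2^⌊(n−2)/2⌋) such that G is n-clique-free and the complement of G is n-clique-free. -/
/-!
Colour the edges of a complete graph uniformly at random with `r` colours. A fixed set of `n`
vertices spans `n.choose 2` edges, so it is monochromatic in a given colour with probability
`r ^ (-n.choose 2)`. By the union bound some colouring has no monochromatic `n`-clique as soon as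
`r * N.choose n < r ^ n.choose 2`, where `N` is the number of vertices. If `r ≤ n!`, the estimate
`n! * N.choose n ≤ N ^ n` reduces this to `N ^ 2 < r ^ (n - 1)`. Two colours amount to a graph and
its complement.
-/

open Finset SimpleGraph
open scoped Nat

section Colouring

variable {α K : Type*} [Fintype K]

theorem card_filter_forall_mem_eq [Fintype α] [DecidableEq α] [DecidableEq K] (s : Finset α)
    (k : K) :
    #{f : α → K | ∀ x ∈ s, f x = k} = Fintype.card K ^ #sᶜ := by
  have filter_eq_piFinset : ({f : α → K | ∀ x ∈ s, f x = k} : Finset (α → K)) =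
      Fintype.piFinset fun x ↦ if x ∈ s then {k} else univ := by
    ext f
    simp only [mem_filter_univ, Fintype.mem_piFinset]
    refine forall_congr' fun x ↦ ?_
    split_ifs with hx <;> simp [hx]
  simp only [filter_eq_piFinset, Fintype.card_piFinset, apply_ite card, card_singleton, card_univ,
    prod_ite, prod_const, one_pow, one_mul, filter_not, filter_univ_mem, compl_eq_univ_sdiff]

theorem exists_forall_mem_not_monochromatic [Finite α] [Nonempty K] {F : Finset (Finset α)} {m : ℕ}
    (hm : ∀ s ∈ F, m ≤ #s) (hF : Fintype.card K * #F < Fintype.card K ^ m) :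
    ∃ f : α → K, ∀ s ∈ F, ∀ k, ∃ x ∈ s, f x ≠ k := by
  classical
  have := Fintype.ofFinite α
  let monochromatic (p : Finset α × K) : Finset (α → K) := {f | ∀ x ∈ p.1, f x = p.2}
  have card_monochromatic_mul_le (p) (hp : p ∈ F ×ˢ (univ : Finset K)) :
      #(monochromatic p) * Fintype.card K ^ m ≤ Fintype.card (α → K) := by
    calc #(monochromatic p) * Fintype.card K ^ m
      _ = Fintype.card K ^ (#p.1ᶜ + m) := by rw [card_filter_forall_mem_eq p.1 p.2, pow_add]
      _ ≤ Fintype.card K ^ (#p.1ᶜ + #p.1) := by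
        gcongr
        · exact Fintype.card_pos
        · exact hm p.1 (mem_product.mp hp).1
      _ = Fintype.card (α → K) := by rw [card_compl_add_card, Fintype.card_fun]
  by_contra! h
  have univ_subset : univ ⊆ (F ×ˢ univ).biUnion monochromatic := fun f _ ↦ by
    obtain ⟨s, hs, k, hk⟩ := h f
    exact mem_biUnion.mpr ⟨(s, k), mk_mem_product hs (mem_univ k), (mem_filter_univ f).mpr hk⟩
  refine lt_irrefl (Fintype.card (α → K) * Fintype.card K ^ m) ?_
  calc Fintype.card (α → K) * Fintype.card K ^ m
    _ ≤ (∑ p ∈ F ×ˢ univ, #(monochromatic p)) * Fintype.card K ^ m := by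
      gcongr
      exact (card_le_card univ_subset).trans card_biUnion_le
    _ ≤ #(F ×ˢ (univ : Finset K)) * Fintype.card (α → K) := by
      rw [sum_mul]
      exact sum_le_card_nsmul _ _ _ card_monochromatic_mul_le
    _ = Fintype.card (α → K) * (Fintype.card K * #F) := by
      rw [card_product, card_univ, mul_comm #F, mul_comm]
    _ < Fintype.card (α → K) * Fintype.card K ^ m := by
      gcongr

end Colouring

section EdgeLabeling

variable {V K : Type*}

/-- The edges of the complete graph on `V` with both endpoints in `s`, taken in the subtype on which
a `TopEdgeLabeling` is a function: `s` is a clique of one label exactly when this set is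
monochromatic. -/
def edgesWithin [DecidableEq V] (s : Finset V) : Finset (⊤ : SimpleGraph V).edgeSet :=
  s.sym2.subtype (· ∈ (⊤ : SimpleGraph V).edgeSet)

theorem card_edgesWithin [DecidableEq V] (s : Finset V) : #(edgesWithin s) = (#s).choose 2 := by
  rw [edgesWithin, card_subtype, ← Sym2.card_image_offDiag, sym2_eq_image,
    ← Sym2.filter_image_mk_not_isDiag]
  simp only [edgeSet_top, Set.mem_compl_iff, Sym2.mem_diagSet]

theorem eq_of_isClique_labelGraph [DecidableEq V] {C : TopEdgeLabeling V K} {k : K} {s : Finset V}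
    (hs : (C.labelGraph k).IsClique s) {e : (⊤ : SimpleGraph V).edgeSet}
    (he : e ∈ edgesWithin s) : C e = k := by
  obtain ⟨⟨a, b⟩, hab⟩ := e
  obtain ⟨ha, hb⟩ := mk_mem_sym2_iff.mp (mem_subtype.mp he)
  exact ((EdgeLabeling.labelGraph_adj a b).mp (hs ha hb hab)).2

theorem exists_topEdgeLabeling_forall_cliqueFree [Fintype V] [Fintype K] [Nonempty K] {n : ℕ}
    (h : Fintype.card K * (Fintype.card V).choose n < Fintype.card K ^ n.choose 2) :
    ∃ C : TopEdgeLabeling V K, ∀ k, (C.labelGraph k).CliqueFree n := by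
  classical
  let F := (powersetCard n (univ : Finset V)).image edgesWithin
  have card_F : #F ≤ (Fintype.card V).choose n :=
    card_image_le.trans_eq (card_powersetCard n univ)
  have choose_two_le : ∀ E ∈ F, n.choose 2 ≤ #E := by
    simp only [F, forall_mem_image, card_edgesWithin, mem_powersetCard]
    rintro s ⟨-, rfl⟩
    exact le_rfl
  obtain ⟨C, hC⟩ := exists_forall_mem_not_monochromatic (K := K) choose_two_le
    ((Nat.mul_le_mul_left _ card_F).trans_lt h)
  refine ⟨C, fun k s hs ↦ ?_⟩
  have hsF : edgesWithin s ∈ F :=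
    mem_image_of_mem _ (mem_powersetCard.mpr ⟨subset_univ s, hs.card_eq⟩)
  obtain ⟨e, he, hek⟩ := hC _ hsF k
  exact hek (eq_of_isClique_labelGraph hs.isClique he)

end EdgeLabeling

theorem compl_labelGraph_one {V : Type*} (C : TopEdgeLabeling V (Fin 2)) :
    (C.labelGraph 1)ᶜ = C.labelGraph 0 := by
  classical
  rw [← toTopEdgeLabeling_labelGraph_compl, TopEdgeLabeling.labelGraph_toTopEdgeLabeling]

theorem mul_choose_lt_pow_choose_two {r n N : ℕ} (hn : n ≠ 0) (hr : r ≤ n !)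
    (hN : N ^ 2 < r ^ (n - 1)) : r * N.choose n < r ^ n.choose 2 := by
  have pow_lt : N ^ n < r ^ n.choose 2 := by
    refine lt_of_pow_lt_pow_left₀ 2 (Nat.zero_le _) ?_
    calc (N ^ n) ^ 2
      _ = (N ^ 2) ^ n := pow_right_comm N n 2
      _ < (r ^ (n - 1)) ^ n := Nat.pow_lt_pow_left hN hn
      _ = (r ^ n.choose 2) ^ 2 := by
        rw [← pow_mul, ← pow_mul, Nat.choose_two_right,
          Nat.div_mul_cancel (Nat.even_mul_pred_self n).two_dvd, mul_comm]
  calc r * N.choose n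
    _ ≤ n ! * N.choose n := Nat.mul_le_mul_right _ hr
    _ = N.descFactorial n := (Nat.descFactorial_eq_factorial_mul_choose N n).symm
    _ ≤ N ^ n := Nat.descFactorial_le_pow N n
    _ < r ^ n.choose 2 := pow_lt

theorem erdos_ramsey_lower_bound_general {V : Type*} [Fintype V] {n : ℕ} (hn : 2 ≤ n)
    (hV : Fintype.card V ^ 2 < 2 ^ (n - 1)) :
    ∃ G : SimpleGraph V, G.CliqueFree n ∧ Gᶜ.CliqueFree n := by
  classical
  have two_mul_choose_lt : 2 * (Fintype.card V).choose n < 2 ^ n.choose 2 :=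
    mul_choose_lt_pow_choose_two (by lia) (hn.trans (Nat.self_le_factorial n)) hV
  obtain ⟨C, hC⟩ := exists_topEdgeLabeling_forall_cliqueFree (V := V) (K := Fin 2)
    (by rwa [Fintype.card_fin])
  exact ⟨C.labelGraph 1, hC 1, compl_labelGraph_one C ▸ hC 0⟩

theorem erdos_ramsey_lower_bound (n : ℕ) (hn : 2 ≤ n) :
    ∃ G : SimpleGraph (Fin (2 ^ ((n - 2) / 2))),
      G.CliqueFree n ∧ Gᶜ.CliqueFree n := by
  refine erdos_ramsey_lower_bound_general hn ?_
  rw [Fintype.card_fin, ← pow_mul]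
  exact Nat.pow_lt_pow_right one_lt_two (by lia)
end

section
/- For all natural numbers n ≥ 2 and k ≥ 1 there exists a coloring of the edges of the complete graph on k^⌊(n−2)/2⌋ vertices with k colors such that there is no monochromatic n-clique. Formally: there is a function c from the 2-element subsets of Fin (k^⌊(n−2)/2⌋) to Fin k such that for every n-element subset S of the vertices and every color t, not all 2-element subsets of S are colored t by c. -/
/-!
Colour the edges uniformly at random. A fixed `n`-set is monochromatic in a fixed colour with
probability `k ^ (-n.choose 2)`, so by the union bound a good colouring of `K_N` exists as soon as
`N.choose n * k < k ^ n.choose 2`. For `N = k ^ ((n - 2) / 2)` this holds because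
`N.choose n < N ^ n` and `((n - 2) / 2) * n + 1 ≤ n.choose 2`.
-/

open Finset

section Counting

variable {X K : Type*} [Fintype X] [Fintype K] [DecidableEq X] [DecidableEq K]

theorem card_filter_forall_mem_eq_const (e : Finset X) (t : K) :
    #{c : X → K | ∀ x ∈ e, c x = t} = Fintype.card K ^ #eᶜ := by
  have filter_eq_piFinset : ({c : X → K | ∀ x ∈ e, c x = t} : Finset (X → K)) =
      Fintype.piFinset fun x ↦ if x ∈ eᶜ then univ else {t} := by
    ext c
    simp only [mem_filter_univ, Fintype.mem_piFinset]
    refine forall_congr' fun x ↦ ?_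
    by_cases hx : x ∈ e <;> simp [hx]
  simp only [filter_eq_piFinset, Fintype.card_piFinset, apply_ite card, card_univ,
    card_singleton, Fintype.prod_ite_mem, prod_const]

theorem card_filter_forall_mem_eq_const_mul_pow_le [Nonempty K] {r : ℕ} {e : Finset X}
    (he : r ≤ #e) (t : K) :
    #{c : X → K | ∀ x ∈ e, c x = t} * Fintype.card K ^ r ≤ Fintype.card (X → K) := by
  rw [card_filter_forall_mem_eq_const, ← pow_add, Fintype.card_fun]
  refine Nat.pow_le_pow_right Fintype.card_pos ?_
  have := card_compl_add_card e
  lia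

end Counting

theorem exists_coloring_forall_not_monochromatic {X K : Type*} [Finite X] [Fintype K] [Nonempty K]
    {r : ℕ} {F : Finset (Finset X)} (hr : ∀ e ∈ F, r ≤ #e)
    (hF : #F * Fintype.card K < Fintype.card K ^ r) :
    ∃ c : X → K, ∀ e ∈ F, ∀ t, ¬ ∀ x ∈ e, c x = t := by
  classical
  have := Fintype.ofFinite X
  by_contra! h
  let bad (p : Finset X × K) : Finset (X → K) := {c | ∀ x ∈ p.1, c x = p.2}
  have univ_subset_bad : univ ⊆ (F ×ˢ univ).biUnion bad := by
    intro c _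
    obtain ⟨e, he, t, hc⟩ := h c
    exact mem_biUnion.2 ⟨(e, t), by simpa using he, by simpa [bad] using hc⟩
  have card_bad_mul_le : ∀ p ∈ F ×ˢ univ,
      #(bad p) * Fintype.card K ^ r ≤ Fintype.card (X → K) := fun p hp ↦
    card_filter_forall_mem_eq_const_mul_pow_le (hr _ (mem_product.1 hp).1) p.2
  refine hF.not_ge (Nat.le_of_mul_le_mul_right ?_ (Fintype.card_pos (α := X → K)))
  calc
    Fintype.card K ^ r * Fintype.card (X → K)
    _ ≤ Fintype.card K ^ r * ∑ p ∈ F ×ˢ univ, #(bad p) :=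
      Nat.mul_le_mul_left _ ((card_le_card univ_subset_bad).trans card_biUnion_le)
    _ = ∑ p ∈ F ×ˢ univ, #(bad p) * Fintype.card K ^ r := by rw [mul_comm, sum_mul]
    _ ≤ #(F ×ˢ (univ : Finset K)) * Fintype.card (X → K) := sum_le_card_nsmul _ _ _ card_bad_mul_le
    _ = #F * Fintype.card K * Fintype.card (X → K) := by rw [card_product, card_univ]

theorem exists_coloring_forall_not_monochromatic_clique {V K : Type*} [Fintype V] [Fintype K]
    [Nonempty K] {n r : ℕ}
    (h : (Fintype.card V).choose n * Fintype.card K < Fintype.card K ^ n.choose r) :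
    ∃ c : Finset V → K, ∀ S : Finset V, #S = n → ∀ t, ¬ ∀ e ⊆ S, #e = r → c e = t := by
  classical
  let cliques : Finset (Finset (Finset V)) := (powersetCard n univ).image (powersetCard r)
  have card_cliques_le : #cliques ≤ (Fintype.card V).choose n :=
    card_image_le.trans_eq (by rw [card_powersetCard, card_univ])
  have choose_le_card_clique : ∀ E ∈ cliques, n.choose r ≤ #E := by
    simp +contextual [cliques]
  obtain ⟨c, hc⟩ := exists_coloring_forall_not_monochromatic choose_le_card_clique
    ((Nat.mul_le_mul_right _ card_cliques_le).trans_lt h)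
  refine ⟨c, fun S hS t hSt ↦ hc (powersetCard r S) ?_ t fun e he ↦ ?_⟩
  · exact mem_image_of_mem _ (mem_powersetCard_univ.2 hS)
  · exact hSt e (mem_powersetCard.1 he).1 (mem_powersetCard.1 he).2

theorem half_sub_two_mul_add_one_le_choose_two {n : ℕ} (hn : 2 ≤ n) :
    (n - 2) / 2 * n + 1 ≤ n.choose 2 := by
  rw [Nat.choose_two_right, Nat.le_div_iff_mul_le two_pos]
  calc
    ((n - 2) / 2 * n + 1) * 2
    _ = (n - 2) / 2 * 2 * n + 2 := by ring
    _ ≤ (n - 2) * n + n := by gcongr; exact Nat.div_mul_le_self _ _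
    _ = n * (n - 1) := by
      obtain ⟨m, rfl⟩ := Nat.exists_eq_add_of_le' hn
      simp only [Nat.add_sub_cancel, Nat.add_succ_sub_one]
      ring

theorem choose_pow_half_sub_two_mul_lt {n k : ℕ} (hn : 2 ≤ n) (hk : 1 ≤ k) :
    (k ^ ((n - 2) / 2)).choose n * k < k ^ n.choose 2 :=
  calc
    (k ^ ((n - 2) / 2)).choose n * k
    _ < (k ^ ((n - 2) / 2)) ^ n * k :=
      Nat.mul_lt_mul_of_pos_right (Nat.choose_lt_pow (pow_pos hk _).ne' hn) hk
    _ = k ^ ((n - 2) / 2 * n + 1) := by rw [pow_succ, pow_mul]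
    _ ≤ k ^ n.choose 2 := Nat.pow_le_pow_right hk (half_sub_two_mul_add_one_le_choose_two hn)

theorem erdos_ramsey_multicolor (n k : ℕ) (hn : 2 ≤ n) (hk : 1 ≤ k) :
    ∃ c : Finset (Fin (k ^ ((n - 2) / 2))) → Fin k,
      ∀ S : Finset (Fin (k ^ ((n - 2) / 2))), S.card = n →
        ∀ t : Fin k, ¬ (∀ e ⊆ S, e.card = 2 → c e = t) := by
  have : Nonempty (Fin k) := ⟨⟨0, hk⟩⟩
  apply exists_coloring_forall_not_monochromatic_clique
  simpa only [Fintype.card_fin] using choose_pow_half_sub_two_mul_lt hn hk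
end

section
/- For all natural numbers n, k, l with n ≥ l ≥ 2 and k ≥ 1 there exists a coloring of all l-element subsets of a set with k^⌊(n−l+1)^(l−1)/l!⌋ elements with k colors such that there is no monochromatic n-hyperclique. Formally: there is a function c from the l-element subsets of Fin (k^⌊(n−l+1)^(l−1)/l!⌋) to Fin k such that for every n-element subset S and every color t, not all l-element subsets of S are colored t by c. -/
/-!
A uniformly random coloring makes a given `n`-set monochromatic with probability
`k ^ (1 - n.choose l)`, so by the union bound a good coloring of a set of size `k ^ m` exists as
soon as `k ^ (n * m + 1) < n! * k ^ n.choose l`. For `l ≥ 3` the estimate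
`n * (n - l + 1) ^ (l - 1) < n.descFactorial l` is strict, which leaves a spare factor `k` and makes
this inequality hold. For `l = 2` there is no such slack and the union bound needs `k < n!`. When
`n - 1 ≤ k`, one instead embeds the vertices in the cube `[n - 1] ^ k` and colors an edge by a
coordinate in which its endpoints differ: the vertices of a monochromatic clique then have distinct
entries in a single coordinate, so there are at most `n - 1` of them.
-/

open Finset Fintype
open scoped Nat

/-- The `l`-element subsets of `S` all have color `t`. A coloring of `l`-element subsets is encoded
as a function on all finite subsets, whose values at other cardinalities are irrelevant. -/
def IsMonochromatic {α κ : Type*} (c : Finset α → κ) (l : ℕ) (S : Finset α) (t : κ) : Prop :=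
  ∀ e ⊆ S, #e = l → c e = t

/-- The `l`-element subsets of `α` can be colored by `κ` without a monochromatic `n`-hyperclique;
in arrow notation, `α ↛ (n)^l_κ`. -/
def HasCliqueFreeColoring (α κ : Type*) (l n : ℕ) : Prop :=
  ∃ c : Finset α → κ, ∀ S : Finset α, #S = n → ∀ t, ¬ IsMonochromatic c l S t

lemma pow_half_le_pow {a k : ℕ} (ha : 1 ≤ a) (hak : a ≤ k) : k ^ (a / 2) ≤ a ^ k := by
  obtain rfl | ha2 := ha.eq_or_lt
  · simp
  have hq : 1 ≤ k / a := (Nat.one_le_div_iff ha).mpr hak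
  have hk : k ≤ a ^ (k / a + 1) := calc
    k ≤ a * (k / a + 1) := (Nat.lt_mul_div_succ k ha).le
    _ ≤ a * a ^ (k / a) := Nat.mul_le_mul_left a (Nat.lt_pow_self ha2)
    _ = a ^ (k / a + 1) := (pow_succ' a _).symm
  have hexp : (k / a + 1) * (a / 2) ≤ k := calc
    (k / a + 1) * (a / 2) ≤ (k / a * 2) * (a / 2) := Nat.mul_le_mul_right _ (by lia)
    _ = k / a * (2 * (a / 2)) := mul_assoc ..
    _ ≤ k / a * a := Nat.mul_le_mul_left _ (Nat.mul_div_le a 2)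
    _ ≤ k := Nat.div_mul_le_self k a
  calc k ^ (a / 2) ≤ (a ^ (k / a + 1)) ^ (a / 2) := Nat.pow_le_pow_left hk _
    _ = a ^ ((k / a + 1) * (a / 2)) := (pow_mul ..).symm
    _ ≤ a ^ k := Nat.pow_le_pow_right ha hexp

lemma mul_pow_lt_descFactorial {n l : ℕ} (hl : 3 ≤ l) (hln : l ≤ n) :
    n * (n - l + 1) ^ (l - 1) < n.descFactorial l := by
  obtain ⟨r, rfl⟩ : ∃ r, l = r + 1 := Nat.exists_eq_add_one.mpr (by lia)
  obtain ⟨p, rfl⟩ : ∃ p, n = p + 1 := Nat.exists_eq_add_one.mpr (by lia)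
  rw [Nat.succ_descFactorial_succ, show p + 1 - (r + 1) + 1 = p + 1 - r by lia,
    Nat.add_sub_cancel]
  exact Nat.mul_lt_mul_of_pos_left (Nat.pow_sub_lt_descFactorial (by lia) (by lia)) p.succ_pos

lemma mul_pow_div_factorial_lt_choose {n l : ℕ} (hl : 3 ≤ l) (hln : l ≤ n) :
    n * ((n - l + 1) ^ (l - 1) / l !) < n.choose l := calc
  n * ((n - l + 1) ^ (l - 1) / l !) ≤ n * (n - l + 1) ^ (l - 1) / l ! :=
    Nat.mul_div_le_mul_div_assoc ..
  _ < n.descFactorial l / l ! :=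
    Nat.div_lt_div_of_lt_of_dvd (Nat.factorial_dvd_descFactorial n l)
      (mul_pow_lt_descFactorial hl hln)
  _ = n.choose l := (Nat.choose_eq_descFactorial_div_factorial n l).symm

lemma card_filter_forall_mem_eq_mul_pow {β κ : Type*} [Fintype β] [DecidableEq β] [Fintype κ]
    [DecidableEq κ] (A : Finset β) (t : κ) :
    #{f : β → κ | ∀ x ∈ A, f x = t} * card κ ^ #A = card (β → κ) := by
  have hpi : ({f : β → κ | ∀ x ∈ A, f x = t} : Finset (β → κ)) =
      piFinset fun x ↦ if x ∈ A then {t} else univ := by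
    ext f
    simp only [mem_filter_univ, mem_piFinset]
    refine forall_congr' fun x ↦ ?_
    split_ifs with hx <;> simp [hx]
  have hcard : #{f : β → κ | ∀ x ∈ A, f x = t} = card κ ^ #Aᶜ := by
    simp [hpi, apply_ite Finset.card, prod_ite, filter_notMem_eq_sdiff, compl_eq_univ_sdiff]
  rw [hcard, ← pow_add, card_compl_add_card, card_fun]

namespace HasCliqueFreeColoring

variable {α κ : Type*} {l n : ℕ}

theorem of_choose_mul_lt [Fintype α] [Fintype κ] [Nonempty κ]
    (h : (card α).choose n * card κ < card κ ^ n.choose l) :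
    HasCliqueFreeColoring α κ l n := by
  classical
  let pairs : Finset (Finset α × κ) := univ.powersetCard n ×ˢ univ
  let bad : Finset α × κ → Finset (Finset α → κ) := fun p ↦
    {c | ∀ e ∈ p.1.powersetCard l, c e = p.2}
  have card_bad : ∀ p ∈ pairs, #(bad p) * card κ ^ n.choose l = card (Finset α → κ) := by
    intro p hp
    have hS : #p.1 = n := (mem_powersetCard.mp (mem_product.mp hp).1).2
    simpa only [card_powersetCard, hS] using
      card_filter_forall_mem_eq_mul_pow (p.1.powersetCard l) p.2
  have card_union : #(pairs.biUnion bad) < card (Finset α → κ) := by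
    refine card_biUnion_le.trans_lt (lt_of_mul_lt_mul_right ?_ (Nat.zero_le (card κ ^ n.choose l)))
    calc (∑ p ∈ pairs, #(bad p)) * card κ ^ n.choose l
        = (card α).choose n * card κ * card (Finset α → κ) := by
          rw [sum_mul, sum_congr rfl card_bad, sum_const, smul_eq_mul, card_product,
            card_powersetCard, card_univ, card_univ]
      _ < card κ ^ n.choose l * card (Finset α → κ) := Nat.mul_lt_mul_of_pos_right h card_pos
      _ = card (Finset α → κ) * card κ ^ n.choose l := mul_comm ..
  obtain ⟨c, -, hc⟩ := exists_mem_notMem_of_card_lt_card card_union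
  refine ⟨c, fun S hS t hmono ↦ hc (mem_biUnion.mpr ⟨(S, t), ?_, ?_⟩)⟩
  · simp [pairs, hS]
  · simpa [bad, IsMonochromatic] using hmono

theorem of_card_le_pow_of_pow_lt [Fintype α] [Fintype κ] [Nonempty κ] {m : ℕ}
    (hα : card α ≤ card κ ^ m) (h : card κ ^ (n * m + 1) < n ! * card κ ^ n.choose l) :
    HasCliqueFreeColoring α κ l n := by
  refine of_choose_mul_lt (lt_of_mul_lt_mul_left ?_ (Nat.zero_le n !))
  calc n ! * ((card α).choose n * card κ)
      = (card α).descFactorial n * card κ := by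
        rw [← mul_assoc, Nat.descFactorial_eq_factorial_mul_choose]
    _ ≤ card α ^ n * card κ := Nat.mul_le_mul_right _ (Nat.descFactorial_le_pow _ n)
    _ ≤ (card κ ^ m) ^ n * card κ := Nat.mul_le_mul_right _ (Nat.pow_le_pow_left hα n)
    _ = card κ ^ (n * m + 1) := by rw [← pow_mul, mul_comm m, pow_succ]
    _ < n ! * card κ ^ n.choose l := h

theorem of_card_le_pow_of_mul_lt_choose [Fintype α] [Fintype κ] [Nonempty κ] {m : ℕ} (hn : 2 ≤ n)
    (hα : card α ≤ card κ ^ m) (hm : n * m < n.choose l) : HasCliqueFreeColoring α κ l n := by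
  apply of_card_le_pow_of_pow_lt hα
  calc card κ ^ (n * m + 1)
      ≤ card κ ^ n.choose l := Nat.pow_le_pow_right card_pos hm
    _ < n ! * card κ ^ n.choose l :=
      lt_mul_of_one_lt_left (pow_pos card_pos _) (hn.trans n.self_le_factorial)

theorem of_injective_pi {β : Type*} [Fintype β] [Nonempty κ] {f : α → κ → β}
    (hf : f.Injective) (hn : card β < n) : HasCliqueFreeColoring α κ 2 n := by
  classical
  let Separates (e : Finset α) (i : κ) : Prop := ∃ x ∈ e, ∃ y ∈ e, f x i ≠ f y i
  refine ⟨fun e ↦ Classical.epsilon (Separates e), fun S hS t hmono ↦ ?_⟩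
  have hinj : Set.InjOn (f · t) S := by
    intro x hx y hy hxy
    by_contra hne
    obtain ⟨i, hi⟩ := Function.ne_iff.mp (hf.ne hne)
    have hcolor : Classical.epsilon (Separates {x, y}) = t :=
      hmono {x, y} (insert_subset hx (singleton_subset_iff.mpr hy)) (card_pair hne)
    have hsep : Separates {x, y} t :=
      hcolor ▸ Classical.epsilon_spec (p := Separates {x, y}) ⟨i, x, by simp, y, by simp, hi⟩
    simp [Separates, show f x t = f y t from hxy] at hsep
  have : #S ≤ card β := card_le_card_of_injOn _ (fun _ _ ↦ mem_univ _) hinj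
  lia

theorem of_card_le_pow_half [Fintype α] [Fintype κ] [Nonempty κ] (hn : 2 ≤ n)
    (hα : card α ≤ card κ ^ ((n - 1) / 2)) : HasCliqueFreeColoring α κ 2 n := by
  obtain hκ | hκ := le_or_gt (n - 1) (card κ)
  · classical
    have hcube : card α ≤ card (κ → Fin (n - 1)) := by
      simpa using hα.trans (pow_half_le_pow (by lia) hκ)
    obtain ⟨f⟩ := Function.Embedding.nonempty_of_card_le hcube
    exact of_injective_pi f.injective (by simp; lia)
  · have hchoose : n * ((n - 1) / 2) ≤ n.choose 2 :=
      (Nat.mul_div_le_mul_div_assoc ..).trans_eq (Nat.choose_two_right n).symm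
    have hfact : card κ < n ! := (show card κ < n by lia).trans_le n.self_le_factorial
    apply of_card_le_pow_of_pow_lt hα
    calc card κ ^ (n * ((n - 1) / 2) + 1)
        = card κ * card κ ^ (n * ((n - 1) / 2)) := pow_succ' ..
      _ ≤ card κ * card κ ^ n.choose 2 :=
          Nat.mul_le_mul_left _ (Nat.pow_le_pow_right card_pos hchoose)
      _ < n ! * card κ ^ n.choose 2 :=
          Nat.mul_lt_mul_of_pos_right hfact (pow_pos card_pos _)

end HasCliqueFreeColoring

theorem erdos_hypergraph_ramsey (n k l : ℕ) (hln : l ≤ n) (hl : 2 ≤ l) (hk : 1 ≤ k) :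
    ∃ c : Finset (Fin (k ^ ((n - l + 1) ^ (l - 1) / Nat.factorial l))) → Fin k,
      ∀ S : Finset (Fin (k ^ ((n - l + 1) ^ (l - 1) / Nat.factorial l))), S.card = n →
        ∀ t : Fin k, ¬ (∀ e ⊆ S, e.card = l → c e = t) := by
  change HasCliqueFreeColoring _ _ l n
  have : Nonempty (Fin k) := ⟨⟨0, hk⟩⟩
  obtain rfl | hl3 := hl.eq_or_lt
  · apply HasCliqueFreeColoring.of_card_le_pow_half hln
    simp [show n - 2 + 1 = n - 1 by lia]
  · exact HasCliqueFreeColoring.of_card_le_pow_of_mul_lt_choose (hl.trans hln) (by simp)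
      (mul_pow_div_factorial_lt_choose hl3 hln)
end

section
/- Let n ≥ 1 and s ≥ 1 be natural numbers, let M_1, …, M_s be subsets of {1, …, n}, and let a be a positive real number. If 2^(a²) ≥ (2s)^(2n), then there exists a coloring x : {1,…,n} → {−1, 1} such that for every k ∈ {1,…,s} the absolute value of Δ_{M_k}(x) = Σ_{j ∈ M_k} x(j) is strictly less than a. (Equivalently, for each k the numbers of red and blue elements of M_k differ by less than a.) -/
/-!
Draw the signs `x j` independently and uniformly. The exponential moments of a signed sum factor
over the coordinates, so `𝔼 cosh (∑ j, w j * x j) = ∏ j, cosh (w j) ≤ exp (∑ j, w j ^ 2 / 2)`.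
Applying this to all `c` weight vectors at once, scaled by `t`, gives one colouring for which
`∑ k, cosh (t * D k)` is at most its mean. Since `exp |y| < 2 * cosh y`, every discrepancy `D k` of
that colouring is controlled. The choice `t = 2 * log (2 * c) / a` makes the bound exactly `a`;
unlike the optimal `t = a / σ`, with `σ` the largest sum of squared weights, it is meaningful when
`σ = 0`.
-/

open Finset Real

section Colorings

variable (ι : Type*) [Fintype ι] [DecidableEq ι]

/-- The two-colourings of `ι`, as real vectors with entries `±1`, so that discrepancies are sums of
entries and averaging over random colourings is a finite sum. -/
noncomputable def colorings : Finset (ι → ℝ) :=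
  Fintype.piFinset fun _ ↦ {1, -1}

variable {ι}

lemma mem_colorings {x : ι → ℝ} : x ∈ colorings ι ↔ ∀ j, x j = 1 ∨ x j = -1 := by
  simp [colorings]

lemma colorings_nonempty : (colorings ι).Nonempty :=
  ⟨1, mem_colorings.2 fun _ ↦ Or.inl rfl⟩

lemma card_colorings : #(colorings ι) = 2 ^ Fintype.card ι := by
  simp [colorings, Fintype.card_piFinset, card_pair (show (1 : ℝ) ≠ -1 by norm_num)]

lemma sum_colorings_exp (w : ι → ℝ) :
    ∑ x ∈ colorings ι, exp (∑ j, w j * x j) = 2 ^ Fintype.card ι * ∏ j, cosh (w j) := by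
  have sum_signs (j : ι) : ∑ y ∈ ({1, -1} : Finset ℝ), exp (w j * y) = 2 * cosh (w j) := by
    rw [sum_pair (by norm_num), mul_one, mul_neg_one, cosh_eq]
    ring
  simp_rw [exp_sum, colorings, ← prod_univ_sum (fun _ ↦ {1, -1}) (fun j y ↦ exp (w j * y)),
    sum_signs, prod_mul_distrib, prod_const, card_univ]

lemma sum_colorings_cosh (w : ι → ℝ) :
    ∑ x ∈ colorings ι, cosh (∑ j, w j * x j) = 2 ^ Fintype.card ι * ∏ j, cosh (w j) := by
  have sum_exp_neg := sum_colorings_exp (-w)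
  simp only [Pi.neg_apply, neg_mul, sum_neg_distrib, cosh_neg] at sum_exp_neg
  simp_rw [cosh_eq (∑ _, _), ← sum_div, sum_add_distrib, sum_colorings_exp, sum_exp_neg]
  ring

end Colorings

lemma prod_cosh_le_exp_half_sum_sq {ι : Type*} [Fintype ι] (w : ι → ℝ) :
    ∏ j, cosh (w j) ≤ exp ((∑ j, w j ^ 2) / 2) := by
  rw [sum_div, exp_sum]
  exact prod_le_prod (fun j _ ↦ (cosh_pos _).le) fun j _ ↦ cosh_le_exp_half_sq _

lemma exp_abs_lt_two_mul_cosh (y : ℝ) : exp |y| < 2 * cosh y := by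
  rw [← cosh_abs, cosh_eq]
  linarith [exp_pos (-|y|)]

section Balancing

variable {ι κ : Type*} [Fintype κ]

lemma exists_coloring_sum_cosh_le [Fintype ι] [DecidableEq ι] (v : κ → ι → ℝ) {σ : ℝ}
    (hv : ∀ k, ∑ j, v k j ^ 2 ≤ σ) (t : ℝ) :
    ∃ x ∈ colorings ι,
      ∑ k, cosh (t * ∑ j, v k j * x j) ≤ Fintype.card κ * exp (t ^ 2 * σ / 2) := by
  have moment_le (k : κ) : ∑ x ∈ colorings ι, cosh (t * ∑ j, v k j * x j) ≤
      2 ^ Fintype.card ι * exp (t ^ 2 * σ / 2) := by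
    simp_rw [mul_sum, ← mul_assoc, sum_colorings_cosh]
    gcongr
    refine (prod_cosh_le_exp_half_sum_sq _).trans ?_
    simp_rw [mul_pow, ← mul_sum]
    gcongr
    exact hv k
  refine exists_le_of_sum_le (g := fun _ ↦ (Fintype.card κ : ℝ) * exp (t ^ 2 * σ / 2))
    colorings_nonempty ?_
  calc ∑ x ∈ colorings ι, ∑ k, cosh (t * ∑ j, v k j * x j)
      = ∑ k, ∑ x ∈ colorings ι, cosh (t * ∑ j, v k j * x j) := sum_comm
    _ ≤ ∑ _k : κ, 2 ^ Fintype.card ι * exp (t ^ 2 * σ / 2) := sum_le_sum fun k _ ↦ moment_le k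
    _ = ∑ _x ∈ colorings ι, (Fintype.card κ : ℝ) * exp (t ^ 2 * σ / 2) := by
      simp only [sum_const, card_univ, card_colorings, nsmul_eq_mul, Nat.cast_pow, Nat.cast_ofNat]
      ring

lemma exists_coloring_abs_sum_mul_lt [Fintype ι] [DecidableEq ι] (v : κ → ι → ℝ) {σ a : ℝ}
    (hv : ∀ k, ∑ j, v k j ^ 2 ≤ σ) (ha : 0 < a)
    (h : 2 * σ * log (2 * Fintype.card κ) ≤ a ^ 2) :
    ∃ x ∈ colorings ι, ∀ k, |∑ j, v k j * x j| < a := by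
  set c := (Fintype.card κ : ℝ)
  set L := log (2 * c)
  set t := 2 * L / a with t_def
  obtain ⟨x, hx, sum_cosh_le⟩ := exists_coloring_sum_cosh_le v hv t
  refine ⟨x, hx, fun k ↦ ?_⟩
  have one_le_c : 1 ≤ c := Nat.one_le_cast.2 (Fintype.card_pos_iff.2 ⟨k⟩)
  have L_pos : 0 < L := log_pos (by linarith)
  have exp_L : exp L = 2 * c := exp_log (by linarith)
  have t_pos : 0 < t := by positivity
  have exponent_le : t ^ 2 * σ / 2 ≤ L := by
    calc t ^ 2 * σ / 2 = L * (2 * σ * L) / a ^ 2 := by rw [t_def]; ring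
      _ ≤ L * a ^ 2 / a ^ 2 := by gcongr
      _ = L := by field_simp
  set D := ∑ j, v k j * x j
  have exp_lt : exp (t * |D|) < exp (t * a) := by
    calc exp (t * |D|) = exp |t * D| := by rw [abs_mul, abs_of_pos t_pos]
      _ < 2 * cosh (t * D) := exp_abs_lt_two_mul_cosh _
      _ ≤ 2 * ∑ k, cosh (t * ∑ j, v k j * x j) := by
        gcongr
        exact single_le_sum (f := fun k ↦ cosh (t * ∑ j, v k j * x j))
          (fun k _ ↦ (cosh_pos _).le) (mem_univ k)
      _ ≤ 2 * (c * exp L) := by grw [sum_cosh_le, exponent_le]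
      _ = exp L * exp L := by rw [exp_L]; ring
      _ = exp (t * a) := by rw [← exp_add, t_def, div_mul_cancel₀ _ ha.ne', two_mul]
  exact lt_of_mul_lt_mul_left (exp_lt_exp.1 exp_lt) t_pos.le

theorem discrepancy_bound_general [Finite ι] (M : κ → Finset ι) {m : ℕ} (hM : ∀ k, #(M k) ≤ m)
    {a : ℝ} (ha : 0 < a) (h : 2 * m * log (2 * Fintype.card κ) ≤ a ^ 2) :
    ∃ x : ι → ℝ, (∀ j, x j = 1 ∨ x j = -1) ∧ ∀ k, |∑ j ∈ M k, x j| < a := by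
  classical
  cases nonempty_fintype ι
  have sum_sq_le (k : κ) : ∑ j, (if j ∈ M k then 1 else 0 : ℝ) ^ 2 ≤ m := by
    simpa using hM k
  obtain ⟨x, hx, abs_lt⟩ := exists_coloring_abs_sum_mul_lt _ sum_sq_le ha h
  exact ⟨x, mem_colorings.1 hx, by simpa using abs_lt⟩

end Balancing

lemma mul_log_le_of_pow_le_two_rpow {b y : ℝ} {N : ℕ} (hb : 0 < b) (hy : 0 ≤ y)
    (h : b ^ N ≤ 2 ^ y) : N * log b ≤ y := by
  have log_two_le_one : log 2 ≤ 1 := by linarith [log_le_sub_one_of_pos (zero_lt_two' ℝ)]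
  calc N * log b = log (b ^ N) := (log_pow b N).symm
    _ ≤ log (2 ^ y) := log_le_log (by positivity) h
    _ = y * log 2 := log_rpow two_pos y
    _ ≤ y := mul_le_of_le_one_right hy log_two_le_one

theorem discrepancy_bound (n s : ℕ) (hn : 1 ≤ n) (hs : 1 ≤ s)
    (M : Fin s → Finset (Fin n)) (a : ℝ) (ha : 0 < a)
    (h : ((2 * s : ℕ) : ℝ) ^ (2 * n) ≤ (2 : ℝ) ^ (a ^ 2)) :
    ∃ x : Fin n → ℝ, (∀ j, x j = 1 ∨ x j = -1) ∧
      ∀ k : Fin s, |∑ j ∈ M k, x j| < a := by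
  have log_le := mul_log_le_of_pow_le_two_rpow (by positivity) (sq_nonneg a) h
  exact discrepancy_bound_general M (fun k ↦ card_finset_fin_le (M k)) ha (by simpa using log_le)
end

section
/- Let n ≥ 1 be a natural number, M a subset of {1,…,n}, and a > 0 a real number. Then the number of colorings x : {1,…,n} → {−1, 1} for which Δ_M(x) = Σ_{j ∈ M} x(j) ≥ a is strictly less than 2^(n − a²/(2n)) (where the exponent is a real number). -/
/-!
This is the Chernoff method. Under a uniformly random sign vector `x` the average of
`exp (t * ∑ j, c j * x j)` is `∏ j, cosh (t * c j) ≤ exp (t ^ 2 * (∑ j, c j ^ 2) / 2)`. When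
`∑ j, c j ^ 2 ≤ v`, Markov's inequality at the optimal `t = a / v` bounds the proportion of `x` with
`a ≤ ∑ j, c j * x j` by `exp (-a ^ 2 / (2 * v))`, and replacing the base `e` by the smaller base `2`
makes the bound strict. The discrepancy of `M` is the case where `c` is the indicator of `M`, for
which `∑ j, c j ^ 2 = #M ≤ n`.
-/

open Finset Real

lemma card_filter_le_mul_exp_le_sum_exp {α : Type*} (s : Finset α) (f : α → ℝ) (a : ℝ) {t : ℝ}
    (ht : 0 ≤ t) : #{x ∈ s | a ≤ f x} * exp (t * a) ≤ ∑ x ∈ s, exp (t * f x) :=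
  calc #{x ∈ s | a ≤ f x} * exp (t * a)
      = ∑ x ∈ s with a ≤ f x, exp (t * a) := by rw [sum_const, nsmul_eq_mul]
    _ ≤ ∑ x ∈ s with a ≤ f x, exp (t * f x) := by
      refine sum_le_sum fun x hx => ?_
      have hax : a ≤ f x := (mem_filter.1 hx).2
      gcongr
    _ ≤ ∑ x ∈ s, exp (t * f x) :=
      sum_le_sum_of_subset_of_nonneg (filter_subset _ _) fun _ _ _ => (exp_pos _).le

section SignVectors

variable {ι : Type*} [Fintype ι] [DecidableEq ι]

variable (ι) in
/-- The vectors indexed by `ι` with all entries `±1`, that is, the two-colorings of `ι`. They are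
real vectors, collected in a `Finset` so that sums over all colorings make sense. -/
noncomputable def signVectors : Finset (ι → ℝ) :=
  Fintype.piFinset fun _ => {1, -1}

lemma mem_signVectors {x : ι → ℝ} : x ∈ signVectors ι ↔ ∀ j, x j = 1 ∨ x j = -1 := by
  simp [signVectors]

lemma sum_signVectors_exp (c : ι → ℝ) :
    ∑ x ∈ signVectors ι, exp (∑ j, c j * x j) = 2 ^ Fintype.card ι * ∏ j, cosh (c j) :=
  calc ∑ x ∈ signVectors ι, exp (∑ j, c j * x j)
      = ∑ x ∈ signVectors ι, ∏ j, exp (c j * x j) := by simp_rw [exp_sum]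
    _ = ∏ j, ∑ y ∈ ({1, -1} : Finset ℝ), exp (c j * y) :=
      (prod_univ_sum (fun _ => {1, -1}) fun j y => exp (c j * y)).symm
    _ = ∏ j, 2 * cosh (c j) := by
      refine prod_congr rfl fun j _ => ?_
      rw [sum_pair (by norm_num), cosh_eq, mul_one, mul_neg_one]
      ring
    _ = 2 ^ Fintype.card ι * ∏ j, cosh (c j) := by rw [prod_mul_distrib, prod_const, card_univ]

lemma sum_signVectors_exp_le (c : ι → ℝ) :
    ∑ x ∈ signVectors ι, exp (∑ j, c j * x j) ≤
      2 ^ Fintype.card ι * exp ((∑ j, c j ^ 2) / 2) := by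
  rw [sum_signVectors_exp, sum_div, exp_sum]
  gcongr with j
  exact cosh_le_exp_half_sq _

lemma card_filter_signVectors_le (c : ι → ℝ) {a v : ℝ} (ha : 0 ≤ a) (hv : 0 < v)
    (hc : ∑ j, c j ^ 2 ≤ v) :
    #{x ∈ signVectors ι | a ≤ ∑ j, c j * x j} ≤
      2 ^ Fintype.card ι * exp (-(a ^ 2 / (2 * v))) := by
  set t : ℝ := a / v
  have ht : 0 ≤ t := div_nonneg ha hv.le
  have hexponent : t ^ 2 * v / 2 = -(a ^ 2 / (2 * v)) + t * a := by
    simp only [t]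
    field_simp
    ring
  refine le_of_mul_le_mul_right ?_ (exp_pos (t * a))
  calc #{x ∈ signVectors ι | a ≤ ∑ j, c j * x j} * exp (t * a)
      ≤ ∑ x ∈ signVectors ι, exp (t * ∑ j, c j * x j) :=
        card_filter_le_mul_exp_le_sum_exp _ _ _ ht
    _ = ∑ x ∈ signVectors ι, exp (∑ j, t * c j * x j) := by simp_rw [mul_sum, mul_assoc]
    _ ≤ 2 ^ Fintype.card ι * exp ((∑ j, (t * c j) ^ 2) / 2) := sum_signVectors_exp_le _
    _ ≤ 2 ^ Fintype.card ι * exp (t ^ 2 * v / 2) := by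
      simp_rw [mul_pow, ← mul_sum]
      gcongr
    _ = 2 ^ Fintype.card ι * exp (-(a ^ 2 / (2 * v))) * exp (t * a) := by
      rw [hexponent, exp_add, mul_assoc]

end SignVectors

theorem count_large_discrepancy_colorings_general {ι : Type*} [Fintype ι] (c : ι → ℝ) {a v : ℝ}
    (ha : 0 < a) (hv : 0 < v) (hc : ∑ j, c j ^ 2 ≤ v) :
    (Nat.card {x : ι → ℝ // (∀ j, x j = 1 ∨ x j = -1) ∧ a ≤ ∑ j, c j * x j} : ℝ) <
      (2 : ℝ) ^ ((Fintype.card ι : ℝ) - a ^ 2 / (2 * v)) := by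
  classical
  have hcard : Nat.card {x : ι → ℝ // (∀ j, x j = 1 ∨ x j = -1) ∧ a ≤ ∑ j, c j * x j} =
      #{x ∈ signVectors ι | a ≤ ∑ j, c j * x j} :=
    Nat.subtype_card _ fun x => by rw [mem_filter, mem_signVectors]
  have hexp : exp (-(a ^ 2 / (2 * v))) < 2 ^ (-(a ^ 2 / (2 * v))) := by
    rw [← exp_one_rpow]
    exact rpow_lt_rpow_of_neg two_pos exp_one_gt_two (neg_lt_zero.2 (by positivity))
  calc (Nat.card {x : ι → ℝ // (∀ j, x j = 1 ∨ x j = -1) ∧ a ≤ ∑ j, c j * x j} : ℝ)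
      ≤ 2 ^ Fintype.card ι * exp (-(a ^ 2 / (2 * v))) := by
        rw [hcard]
        exact card_filter_signVectors_le c ha.le hv hc
    _ < 2 ^ Fintype.card ι * 2 ^ (-(a ^ 2 / (2 * v))) := by gcongr
    _ = 2 ^ ((Fintype.card ι : ℝ) - a ^ 2 / (2 * v)) := by
      rw [sub_eq_add_neg, rpow_add two_pos, rpow_natCast]

theorem count_large_discrepancy_colorings (n : ℕ) (hn : 1 ≤ n)
    (M : Finset (Fin n)) (a : ℝ) (ha : 0 < a) :
    (Nat.card {x : Fin n → ℝ // (∀ j, x j = 1 ∨ x j = -1) ∧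
        a ≤ ∑ j ∈ M, x j} : ℝ) < (2 : ℝ) ^ ((n : ℝ) - a ^ 2 / (2 * n)) := by
  have hc : ∑ j, (if j ∈ M then (1 : ℝ) else 0) ^ 2 ≤ n := by simpa using card_le_univ M
  simpa using count_large_discrepancy_colorings_general _ ha (Nat.cast_pos.2 hn) hc
end

section
/- There exists a coloring of the edges of the complete graph on 1000 vertices with 4 colors such that there is no monochromatic 12-clique. Formally: there is a function c from the 2-element subsets of Fin 1000 to Fin 4 such that for every 12-element subset S of Fin 1000 and every color t ∈ Fin 4, not all 2-element subsets of S are colored t by c. -/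
/-!
Give the vertices distinct addresses in a product `∀ i, α i`, and color each pair of vertices by
some coordinate in which their addresses differ. On a monochromatic clique of color `t` the `t`-th
coordinate is then injective, so the clique has at most `|α t|` vertices. Four coordinates with
`11` values each provide `11 ^ 4 ≥ 1000` addresses.
-/

open Function

variable {V ι : Type*}

/-- `S` is a monochromatic clique of color `t` for the edge coloring `c`. An edge is encoded as a
two-element finset; the values of `c` on finsets of any other size are irrelevant. -/
def IsMonochromaticClique (c : Finset V → ι) (t : ι) (S : Finset V) : Prop :=
  ∀ e ⊆ S, e.card = 2 → c e = t

theorem injOn_of_forall_card_eq_two {β : Type*} {g : V → β} {S : Finset V}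
    (h : ∀ e ⊆ S, e.card = 2 → Set.InjOn g e) : Set.InjOn g S := by
  classical
  intro x hx y hy hxy
  by_contra hne
  have hsub : {x, y} ⊆ S := Finset.insert_subset hx (Finset.singleton_subset_iff.2 hy)
  exact hne (h {x, y} hsub (Finset.card_pair hne) (by simp) (by simp) hxy)

theorem exists_injOn_coordinate_of_card_eq_two {α : ι → Type*} {f : V → ∀ i, α i}
    (hf : Injective f) {e : Finset V} (he : e.card = 2) :
    ∃ i, Set.InjOn (fun v => f v i) e := by
  classical
  obtain ⟨x, y, hxy, rfl⟩ := Finset.card_eq_two.1 he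
  obtain ⟨i, hi⟩ := Function.ne_iff.1 (hf.ne hxy)
  refine ⟨i, ?_⟩
  rw [Finset.coe_pair, Set.injOn_pair]
  exact fun h => absurd h hi

theorem exists_coloring_card_le_of_injective [Nonempty ι] {α : ι → Type*} [∀ i, Fintype (α i)]
    {f : V → ∀ i, α i} (hf : Injective f) :
    ∃ c : Finset V → ι, ∀ S t, IsMonochromaticClique c t S → S.card ≤ Fintype.card (α t) := by
  choose! c hc using fun e : Finset V => exists_injOn_coordinate_of_card_eq_two hf (e := e)
  refine ⟨c, fun S t hS => ?_⟩
  have hinj : Set.InjOn (fun v => f v t) S :=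
    injOn_of_forall_card_eq_two fun e heS he => hS e heS he ▸ hc e he
  exact Finset.card_le_card_of_injOn _ (fun _ _ => Finset.mem_univ _) hinj

theorem exists_coloring_no_monochromatic_12_clique_general [Fintype V] [Fintype ι] [Nonempty ι]
    {m : ι → ℕ} (hV : Fintype.card V ≤ ∏ i, m i) :
    ∃ c : Finset V → ι, ∀ S t, m t < S.card → ¬ IsMonochromaticClique c t S := by
  classical
  obtain ⟨f⟩ : Nonempty (V ↪ ∀ i, Fin (m i)) := Embedding.nonempty_of_card_le (by simpa using hV)
  obtain ⟨c, hc⟩ := exists_coloring_card_le_of_injective f.injective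
  exact ⟨c, fun S t hlt hS => hlt.not_ge (by simpa using hc S t hS)⟩

theorem exists_coloring_no_monochromatic_12_clique :
    ∃ c : Finset (Fin 1000) → Fin 4,
      ∀ S : Finset (Fin 1000), S.card = 12 →
        ∀ t : Fin 4, ¬ (∀ e ⊆ S, e.card = 2 → c e = t) := by
  obtain ⟨c, hc⟩ := exists_coloring_no_monochromatic_12_clique_general
    (V := Fin 1000) (ι := Fin 4) (m := fun _ => 11) (by simp)
  exact ⟨c, fun S hS t => hc S t (by simp [hS])⟩
end

section
/- There exists a family H of 3-element subsets of a 1000-element set such that there is no 10-element subset S with every 3-element subset of S belonging to H, and no 10-element subset S with no 3-element subset of S belonging to H. Formally: there is a set H of 3-element subsets of Fin 1000 such that for every 10-element subset S of Fin 1000, neither all 3-element subsets of S lie in H nor all 3-element subsets of S lie outside H. -/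
/-!
Erdős' counting argument. Colour the triples of the vertex set with two colours and call a
ten-element set bad if its `Nat.choose 10 3 = 120` triples all receive the same colour. A given
ten-element set is bad for a proportion `2 / 2 ^ 120` of the colourings, and there are fewer than
`2 ^ 119` ten-element sets, so some colouring makes none of them bad.
-/

open Finset

variable {α : Type*}

/-- Property B for a hypergraph with finite edges: the vertices can be coloured with two colours so
that no edge is monochromatic. The colouring is encoded by one of its colour classes, `C`. -/
def HasPropertyB (F : Set (Finset α)) : Prop :=
  ∃ C : Set α, ∀ T ∈ F, (∃ x ∈ T, x ∈ C) ∧ ∃ x ∈ T, x ∉ C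

theorem card_filter_subset_or_disjoint_le [DecidableEq α] {T U : Finset α} (hTU : T ⊆ U) :
    #{C ∈ U.powerset | T ⊆ C ∨ Disjoint T C} ≤ 2 * 2 ^ (#U - #T) := by
  have card_subset : #{C ∈ U.powerset | T ⊆ C} = 2 ^ (#U - #T) := by
    rw [← card_Icc_finset hTU]
    congr 1
    ext C
    simp [and_comm]
  have card_disjoint : #{C ∈ U.powerset | Disjoint T C} = 2 ^ (#U - #T) := by
    rw [← card_sdiff_of_subset hTU, ← card_powerset]
    congr 1
    ext C
    simp [subset_sdiff, disjoint_comm]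
  calc #{C ∈ U.powerset | T ⊆ C ∨ Disjoint T C}
      ≤ #{C ∈ U.powerset | T ⊆ C} + #{C ∈ U.powerset | Disjoint T C} := by
        rw [filter_or]
        exact card_union_le _ _
    _ = 2 * 2 ^ (#U - #T) := by rw [card_subset, card_disjoint, two_mul]

theorem hasPropertyB_of_two_mul_card_lt {F : Finset (Finset α)} {k : ℕ}
    (hk : ∀ T ∈ F, k ≤ #T) (hF : 2 * #F < 2 ^ k) : HasPropertyB (F : Set (Finset α)) := by
  classical
  obtain rfl | ⟨T₀, hT₀⟩ := F.eq_empty_or_nonempty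
  · exact ⟨∅, by simp⟩
  let U := F.biUnion id
  have subset_U : ∀ T ∈ F, T ⊆ U := fun T hT => subset_biUnion_of_mem id hT
  have k_le : k ≤ #U := (hk T₀ hT₀).trans (card_le_card (subset_U T₀ hT₀))
  let bad (T : Finset α) : Finset (Finset α) := {C ∈ U.powerset | T ⊆ C ∨ Disjoint T C}
  have card_bad : ∀ T ∈ F, #(bad T) ≤ 2 * 2 ^ (#U - k) := fun T hT =>
    (card_filter_subset_or_disjoint_le (subset_U T hT)).trans <| by
      gcongr
      · exact one_le_two
      · exact hk T hT
  have card_lt : #(F.biUnion bad) < #U.powerset :=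
    calc #(F.biUnion bad) ≤ #F * (2 * 2 ^ (#U - k)) := card_biUnion_le_card_mul _ _ _ card_bad
      _ = 2 * #F * 2 ^ (#U - k) := by ring
      _ < 2 ^ k * 2 ^ (#U - k) := by gcongr
      _ = #U.powerset := by rw [← pow_add, Nat.add_sub_cancel' k_le, card_powerset]
  obtain ⟨C, hCU, hC⟩ := exists_mem_notMem_of_card_lt_card card_lt
  refine ⟨C, fun T hT => ?_⟩
  have not_bad : ¬ (T ⊆ C ∨ Disjoint T C) := fun h =>
    hC (mem_biUnion.2 ⟨T, hT, mem_filter.2 ⟨hCU, h⟩⟩)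
  rw [not_or, not_subset, not_disjoint_iff] at not_bad
  exact not_bad.symm

theorem hasPropertyB_image_powersetCard [Fintype α] {r s : ℕ}
    (h : 2 * (Fintype.card α).choose s < 2 ^ s.choose r) :
    HasPropertyB (powersetCard r '' {S : Finset α | #S = s}) := by
  classical
  let edges := (powersetCard s (univ : Finset α)).image (powersetCard r)
  have coe_edges : (edges : Set (Finset (Finset α))) = powersetCard r '' {S | #S = s} := by
    ext T
    simp [edges, mem_powersetCard]
  rw [← coe_edges]
  refine hasPropertyB_of_two_mul_card_lt (k := s.choose r) ?_ ?_
  · simp +contextual [edges, mem_powersetCard]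
  · calc 2 * #edges ≤ 2 * (Fintype.card α).choose s := by
          gcongr
          exact card_image_le.trans (card_powersetCard s univ).le
      _ < 2 ^ s.choose r := h

theorem exists_hypergraph_no_10_hyperclique_or_antihyperclique_general [Fintype α] {r s : ℕ}
    (h : 2 * (Fintype.card α).choose s < 2 ^ s.choose r) :
    ∃ H : Set (Finset α), (∀ A ∈ H, #A = r) ∧
      ∀ S : Finset α, #S = s →
        ¬ (∀ A ⊆ S, #A = r → A ∈ H) ∧ ¬ (∀ A ⊆ S, #A = r → A ∉ H) := by
  obtain ⟨C, hC⟩ := hasPropertyB_image_powersetCard h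
  refine ⟨{A ∈ C | #A = r}, fun A hA => hA.2, fun S hS => ?_⟩
  obtain ⟨⟨A, hA, hAC⟩, B, hB, hBC⟩ := hC _ ⟨S, hS, rfl⟩
  rw [mem_powersetCard] at hA hB
  exact ⟨fun clique => hBC (clique B hB.1 hB.2).1,
    fun anticlique => anticlique A hA.1 hA.2 ⟨hAC, hA.2⟩⟩

theorem exists_hypergraph_no_10_hyperclique_or_antihyperclique :
    ∃ H : Set (Finset (Fin 1000)), (∀ A ∈ H, A.card = 3) ∧
      ∀ S : Finset (Fin 1000), S.card = 10 →
        ¬ (∀ A ⊆ S, A.card = 3 → A ∈ H) ∧ ¬ (∀ A ⊆ S, A.card = 3 → A ∉ H) :=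
  exists_hypergraph_no_10_hyperclique_or_antihyperclique_general <| by
    rw [Fintype.card_fin]
    norm_num [Nat.choose_eq_descFactorial_div_factorial]
end

section
/- For any family M_1, …, M_300 of subsets of {1, …, 1000} there exists a coloring x : {1,…,1000} → {−1, 1} such that for every k ∈ {1,…,300} the absolute value of Δ_{M_k}(x) = Σ_{j ∈ M_k} x(j) is at most 150. -/
/-!
Colour the points by independent fair signs `x`. The expectation of `exp ⟨a, x⟩` factors over the
coordinates as `∏ cosh aⱼ`, so `cosh ⟨a, x⟩` has expectation at most `exp (‖a‖² / 2)`. For `m`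
vectors `aₖ` the potential `∑ₖ exp (-‖aₖ‖² / 2) * cosh ⟨aₖ, x⟩` therefore has expectation at most
`m`, and a colouring at which it does not exceed `m` satisfies
`|⟨aₖ, x⟩| ≤ log (2 * m) + ‖aₖ‖² / 2` for all `k` at once. Rescaling each `aₖ` to squared length
`2 * log (2 * m)` balances the two terms and gives `|⟨aₖ, x⟩| ≤ √(2 * ‖aₖ‖² * log (2 * m))`.
-/

open Finset Real
open scoped BigOperators

section Signs

variable {ι κ : Type*} [Fintype ι] [Fintype κ]

lemma expect_exp_sum_signs_mul [DecidableEq ι] (a : ι → ℝ) :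
    𝔼 x : ι → ℤˣ, exp (∑ j, ((x j : ℤ) : ℝ) * a j) = ∏ j, cosh (a j) := by
  have coordinate (j : ι) : ∑ ε : ℤˣ, exp (((ε : ℤ) : ℝ) * a j) = 2 * cosh (a j) := by
    rw [UnitsInt.univ, sum_pair (units_ne_neg_self 1), cosh_eq]
    push_cast
    ring_nf
  have total : ∑ x : ι → ℤˣ, exp (∑ j, ((x j : ℤ) : ℝ) * a j) =
      2 ^ Fintype.card ι * ∏ j, cosh (a j) := by
    calc ∑ x : ι → ℤˣ, exp (∑ j, ((x j : ℤ) : ℝ) * a j)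
        = ∑ x : ι → ℤˣ, ∏ j, exp (((x j : ℤ) : ℝ) * a j) := by simp only [exp_sum]
      _ = ∏ j, ∑ ε : ℤˣ, exp (((ε : ℤ) : ℝ) * a j) :=
          (Fintype.prod_sum fun j (ε : ℤˣ) ↦ exp (((ε : ℤ) : ℝ) * a j)).symm
      _ = 2 ^ Fintype.card ι * ∏ j, cosh (a j) := by
          simp only [coordinate, prod_mul_distrib, prod_const, card_univ]
  rw [Fintype.expect_eq_sum_div_card, total]
  simp

lemma expect_cosh_sum_signs_mul [DecidableEq ι] (a : ι → ℝ) :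
    𝔼 x : ι → ℤˣ, cosh (∑ j, ((x j : ℤ) : ℝ) * a j) = ∏ j, cosh (a j) := by
  have negated := expect_exp_sum_signs_mul (-a)
  simp only [Pi.neg_apply, mul_neg, sum_neg_distrib, cosh_neg] at negated
  simp only [cosh_eq (∑ _, _), ← expect_div, expect_add_distrib, negated,
    expect_exp_sum_signs_mul, add_self_div_two]

lemma expect_cosh_sum_signs_mul_le [DecidableEq ι] (a : ι → ℝ) :
    𝔼 x : ι → ℤˣ, cosh (∑ j, ((x j : ℤ) : ℝ) * a j) ≤ exp ((∑ j, a j ^ 2) / 2) := by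
  rw [expect_cosh_sum_signs_mul, sum_div, exp_sum]
  exact prod_le_prod (fun j _ ↦ (cosh_pos _).le) fun j _ ↦ cosh_le_exp_half_sq _

lemma exists_signs_sum_exp_mul_cosh_le (a : κ → ι → ℝ) :
    ∃ x : ι → ℤˣ, ∑ k, exp (-((∑ j, a k j ^ 2) / 2)) * cosh (∑ j, ((x j : ℤ) : ℝ) * a k j) ≤
      Fintype.card κ := by
  classical
  suffices average : 𝔼 x : ι → ℤˣ,
      ∑ k, exp (-((∑ j, a k j ^ 2) / 2)) * cosh (∑ j, ((x j : ℤ) : ℝ) * a k j) ≤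
        Fintype.card κ by
    obtain ⟨x, -, hx⟩ := exists_le_of_expect_le univ_nonempty average
    exact ⟨x, hx⟩
  rw [expect_sum_comm, ← card_univ, ← nsmul_one]
  refine sum_le_card_nsmul _ _ _ fun k _ ↦ ?_
  rw [← mul_expect, exp_neg, inv_mul_le_one₀ (exp_pos _)]
  exact expect_cosh_sum_signs_mul_le (a k)

lemma abs_le_log_two_mul_of_cosh_le {y c : ℝ} (h : cosh y ≤ c) : |y| ≤ log (2 * c) := by
  have c_pos : 0 < c := (cosh_pos y).trans_le h
  rw [le_log_iff_exp_le (by positivity)]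
  rw [← cosh_abs, cosh_eq] at h
  linarith [exp_pos (-|y|)]

lemma exists_signs_abs_sum_mul_le_log_add (a : κ → ι → ℝ) :
    ∃ x : ι → ℤˣ, ∀ k, |∑ j, ((x j : ℤ) : ℝ) * a k j| ≤
      log (2 * Fintype.card κ) + (∑ j, a k j ^ 2) / 2 := by
  obtain ⟨x, hx⟩ := exists_signs_sum_exp_mul_cosh_le a
  refine ⟨x, fun k ↦ ?_⟩
  have : Nonempty κ := ⟨k⟩
  have single : exp (-((∑ j, a k j ^ 2) / 2)) * cosh (∑ j, ((x j : ℤ) : ℝ) * a k j) ≤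
      Fintype.card κ :=
    (single_le_sum (f := fun i ↦ exp (-((∑ j, a i j ^ 2) / 2)) *
      cosh (∑ j, ((x j : ℤ) : ℝ) * a i j))
      (fun i _ ↦ mul_nonneg (exp_pos _).le (cosh_pos _).le) (mem_univ k)).trans hx
  rw [exp_neg, inv_mul_le_iff₀ (exp_pos _), mul_comm] at single
  have bound := abs_le_log_two_mul_of_cosh_le single
  rwa [← mul_assoc, log_mul (by positivity) (exp_ne_zero _), log_exp] at bound

theorem exists_signs_abs_sum_mul_le_sqrt (a : κ → ι → ℝ) :
    ∃ x : ι → ℤˣ, ∀ k, |∑ j, ((x j : ℤ) : ℝ) * a k j| ≤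
      √(2 * (∑ j, a k j ^ 2) * log (2 * Fintype.card κ)) := by
  set L := log (2 * Fintype.card κ)
  let t (k : κ) : ℝ := √(2 * L / ∑ j, a k j ^ 2)
  obtain ⟨x, hx⟩ := exists_signs_abs_sum_mul_le_log_add fun k j ↦ t k * a k j
  refine ⟨x, fun k ↦ ?_⟩
  have L_pos : 0 < L := by
    have : (1 : ℝ) ≤ Fintype.card κ := mod_cast Fintype.card_pos_iff.mpr ⟨k⟩
    exact log_pos (by linarith)
  obtain sum_sq_zero | sum_sq_pos := (sum_nonneg fun j _ ↦ sq_nonneg (a k j)).eq_or_lt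
  · have a_zero (j : ι) : a k j = 0 := by
      have := (sum_eq_zero_iff_of_nonneg fun j _ ↦ sq_nonneg (a k j)).mp sum_sq_zero.symm
      exact pow_eq_zero_iff two_ne_zero |>.mp (this j (mem_univ j))
    simp [a_zero]
  have t_sq : t k ^ 2 = 2 * L / ∑ j, a k j ^ 2 := sq_sqrt (by positivity)
  have rescaled : |t k * ∑ j, ((x j : ℤ) : ℝ) * a k j| ≤ 2 * L := by
    calc |t k * ∑ j, ((x j : ℤ) : ℝ) * a k j|
        = |∑ j, ((x j : ℤ) : ℝ) * (t k * a k j)| := by simp only [mul_sum, mul_left_comm]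
      _ ≤ L + (∑ j, (t k * a k j) ^ 2) / 2 := hx k
      _ = 2 * L := by
          simp only [mul_pow, ← mul_sum, t_sq]
          field_simp
          ring
  refine abs_le_sqrt ?_
  have squared := sq_le_sq' (abs_le.mp rescaled).1 (abs_le.mp rescaled).2
  rw [mul_pow, t_sq, div_mul_eq_mul_div, div_le_iff₀ sum_sq_pos] at squared
  refine le_of_mul_le_mul_left (squared.trans_eq ?_) (by positivity : 0 < 2 * L)
  ring

end Signs

lemma sqrt_two_mul_mul_log_le {n : ℝ} (hn : n ≤ 1000) : √(2 * n * log (2 * 300)) ≤ 150 := by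
  have log_le : log (2 * 300) ≤ 10 := by
    calc log (2 * 300) ≤ log (2 ^ 10) := log_le_log (by norm_num) (by norm_num)
      _ = 10 * log 2 := by rw [log_pow, Nat.cast_ofNat]
      _ ≤ 10 := by linarith [log_two_lt_d9]
  refine sqrt_le_iff.mpr ⟨by norm_num, ?_⟩
  calc 2 * n * log (2 * 300) ≤ 2 * 1000 * 10 := by gcongr
    _ ≤ 150 ^ 2 := by norm_num

theorem pioneers_discrepancy_general {ι κ : Type*} [Fintype κ] (M : κ → Finset ι) :
    ∃ x : ι → ℤ, (∀ j, x j = 1 ∨ x j = -1) ∧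
      ∀ k, (|∑ j ∈ M k, x j| : ℝ) ≤ √(2 * #(M k) * log (2 * Fintype.card κ)) := by
  classical
  let S := univ.biUnion M
  have M_subset (k : κ) : M k ⊆ S := subset_biUnion_of_mem M (mem_univ k)
  have sum_coe_indicator (k : κ) (f : ι → ℝ) :
      ∑ j : S, f j * (if (j : ι) ∈ M k then 1 else 0) = ∑ j ∈ M k, f j := by
    rw [sum_coe_sort S fun j ↦ f j * if j ∈ M k then 1 else 0]
    simp [sum_ite_mem, inter_eq_right.mpr (M_subset k)]
  obtain ⟨ε, hε⟩ := exists_signs_abs_sum_mul_le_sqrt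
    fun k (j : S) ↦ if (j : ι) ∈ M k then (1 : ℝ) else 0
  let x (j : ι) : ℤˣ := if hj : j ∈ S then ε ⟨j, hj⟩ else 1
  refine ⟨fun j ↦ x j, fun j ↦ Int.isUnit_iff.mp (x j).isUnit, fun k ↦ ?_⟩
  have signed_sum : ∑ j : S, ((ε j : ℤ) : ℝ) * (if (j : ι) ∈ M k then 1 else 0) =
      ∑ j ∈ M k, ((x j : ℤ) : ℝ) := by
    simp [← sum_coe_indicator, x]
  have sum_sq_indicator : ∑ j : S, (if (j : ι) ∈ M k then (1 : ℝ) else 0) ^ 2 = #(M k) := by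
    simpa using sum_coe_indicator k 1
  rw [← signed_sum, ← sum_sq_indicator]
  exact hε k

theorem pioneers_discrepancy (M : Fin 300 → Finset (Fin 1000)) :
    ∃ x : Fin 1000 → ℤ, (∀ j, x j = 1 ∨ x j = -1) ∧
      ∀ k : Fin 300, |∑ j ∈ M k, x j| ≤ 150 := by
  obtain ⟨x, hx, bound⟩ := Fintype.card_fin 300 ▸ pioneers_discrepancy_general M
  exact ⟨x, hx, fun k ↦ mod_cast (bound k).trans <|
    sqrt_two_mul_mul_log_le (mod_cast card_finset_fin_le (M k))⟩
end

section
/- The number of simple graphs on the vertex set Fin 10000000 that contain a 51-clique or a 51-anticlique is strictly less than 2^(10^7·(10^7−1)/2), i.e. strictly less than the total number of simple graphs on these vertices. -/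
/-!
Erdős's union bound. A graph on `N` vertices containing a fixed graph with `m` edges is a free
choice of the other `N.choose 2 - m` pairs, so a given `k`-set is a clique in the proportion
`2 ^ (-(k.choose 2))` of all graphs. Summing over the `N.choose k` possible `k`-sets, and doubling
to account for anticliques, gives a proportion below `1` as soon as
`2 * N.choose k < 2 ^ (k.choose 2)`.
-/

section Counting

variable {V : Type*}

theorem image_edgeFinset_Ici [DecidableEq V] [∀ G : SimpleGraph V, Fintype G.edgeSet]
    (H : SimpleGraph V) :
    (fun G : SimpleGraph V ↦ G.edgeFinset) '' Set.Ici H =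
      Finset.Icc H.edgeFinset (⊤ : SimpleGraph V).edgeFinset := by
  ext E
  simp only [Set.mem_image, Set.mem_Ici, Finset.coe_Icc, Set.mem_Icc]
  refine ⟨?_, fun ⟨hHE, hE⟩ ↦ ⟨SimpleGraph.fromEdgeSet E, ?_, ?_⟩⟩
  · rintro ⟨G, hHG, rfl⟩
    exact ⟨SimpleGraph.edgeFinset_mono hHG, SimpleGraph.edgeFinset_mono le_top⟩
  · simpa [← Finset.coe_subset] using hHE
  · rw [← Finset.coe_subset] at hE
    simpa [← Finset.coe_inj, Set.disjoint_left, Set.subset_def] using hE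

theorem ncard_Ici_mul_two_pow [Fintype V] (H : SimpleGraph V) [DecidableRel H.Adj] :
    (Set.Ici H).ncard * 2 ^ H.edgeFinset.card = 2 ^ (Fintype.card V).choose 2 := by
  classical
  have edgeFinset_injective : Function.Injective fun G : SimpleGraph V ↦ G.edgeFinset :=
    fun _ _ ↦ SimpleGraph.edgeFinset_inj.mp
  have edgeFinset_subset : H.edgeFinset ⊆ (⊤ : SimpleGraph V).edgeFinset :=
    SimpleGraph.edgeFinset_mono le_top
  rw [← Set.ncard_image_of_injective _ edgeFinset_injective, image_edgeFinset_Ici,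
    Set.ncard_coe_finset, Finset.card_Icc_finset (by convert edgeFinset_subset),
    ← SimpleGraph.card_edgeFinset_top_eq_card_choose_two]
  convert pow_sub_mul_pow 2 (Finset.card_le_card edgeFinset_subset)

theorem map_subtype_top_le_iff_isClique (G : SimpleGraph V) (s : Set V) :
    (⊤ : SimpleGraph s).map (Function.Embedding.subtype _) ≤ G ↔ G.IsClique s := by
  rw [SimpleGraph.map_le_iff_le_comap, top_le_iff, ← SimpleGraph.induce_eq_top]

theorem ncard_isClique_mul_two_pow [Fintype V] (s : Finset V) :
    {G : SimpleGraph V | G.IsClique s}.ncard * 2 ^ s.card.choose 2 =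
      2 ^ (Fintype.card V).choose 2 := by
  classical
  let K : SimpleGraph V := (⊤ : SimpleGraph s).map (Function.Embedding.subtype _)
  have isClique_eq_Ici : {G : SimpleGraph V | G.IsClique s} = Set.Ici K :=
    Set.ext fun G ↦ (map_subtype_top_le_iff_isClique G s).symm
  have card_edgeFinset : K.edgeFinset.card = s.card.choose 2 := by
    rw [SimpleGraph.card_edgeFinset_map, SimpleGraph.card_edgeFinset_top_eq_card_choose_two,
      Fintype.card_coe]
  rw [isClique_eq_Ici, ← card_edgeFinset, ncard_Ici_mul_two_pow]

theorem setOf_not_cliqueFree_eq_biUnion [Fintype V] (k : ℕ) :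
    {G : SimpleGraph V | ¬ G.CliqueFree k} =
      ⋃ s ∈ (Finset.univ : Finset V).powersetCard k, {G : SimpleGraph V | G.IsClique s} := by
  ext G
  simp [SimpleGraph.CliqueFree, SimpleGraph.isNClique_iff, and_comm]

theorem ncard_not_cliqueFree_mul_two_pow_le [Fintype V] (k : ℕ) :
    {G : SimpleGraph V | ¬ G.CliqueFree k}.ncard * 2 ^ k.choose 2 ≤
      (Fintype.card V).choose k * 2 ^ (Fintype.card V).choose 2 := by
  let P : Finset (Finset V) := Finset.univ.powersetCard k
  calc {G : SimpleGraph V | ¬ G.CliqueFree k}.ncard * 2 ^ k.choose 2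
      ≤ (∑ s ∈ P, {G : SimpleGraph V | G.IsClique s}.ncard) * 2 ^ k.choose 2 := by
        rw [setOf_not_cliqueFree_eq_biUnion]
        grw [Finset.set_ncard_biUnion_le]
    _ = ∑ s ∈ P, 2 ^ (Fintype.card V).choose 2 := by
        rw [Finset.sum_mul]
        refine Finset.sum_congr rfl fun s hs ↦ ?_
        rw [← (Finset.mem_powersetCard.mp hs).2, ncard_isClique_mul_two_pow]
    _ = (Fintype.card V).choose k * 2 ^ (Fintype.card V).choose 2 := by
        rw [Finset.sum_const, Finset.card_powersetCard, Finset.card_univ, smul_eq_mul]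

end Counting

theorem ncard_setOf_compl {α : Type*} [BooleanAlgebra α] (p : α → Prop) :
    {a | p aᶜ}.ncard = {a | p a}.ncard :=
  Set.ncard_preimage_of_injective_subset_range compl_injective
    ((compl_surjective (α := α)).range_eq ▸ Set.subset_univ _)

theorem two_mul_choose_lt_two_pow_choose_two {n k m : ℕ} (hn : n ≤ 2 ^ m)
    (hm : m * k + 1 < k.choose 2) : 2 * n.choose k < 2 ^ k.choose 2 :=
  calc 2 * n.choose k ≤ 2 * (2 ^ m) ^ k := by grw [Nat.choose_le_pow, hn]
    _ = 2 ^ (m * k + 1) := by rw [← pow_mul, pow_succ']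
    _ < 2 ^ k.choose 2 := Nat.pow_lt_pow_right one_lt_two hm

theorem count_ramsey_graphs_lt_general {V : Type*} [Fintype V] {k : ℕ}
    (hk : 2 * (Fintype.card V).choose k < 2 ^ k.choose 2) :
    Nat.card {G : SimpleGraph V // ¬ G.CliqueFree k ∨ ¬ Gᶜ.CliqueFree k} <
      2 ^ (Fintype.card V).choose 2 := by
  let c := {G : SimpleGraph V | ¬ G.CliqueFree k}.ncard
  have union_bound :
      Nat.card {G : SimpleGraph V // ¬ G.CliqueFree k ∨ ¬ Gᶜ.CliqueFree k} ≤ 2 * c :=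
    calc Nat.card {G : SimpleGraph V // ¬ G.CliqueFree k ∨ ¬ Gᶜ.CliqueFree k}
        ≤ c + {G : SimpleGraph V | ¬ Gᶜ.CliqueFree k}.ncard := Set.ncard_union_le _ _
      _ = c + c := congrArg (c + ·) (ncard_setOf_compl fun G : SimpleGraph V ↦ ¬ G.CliqueFree k)
      _ = 2 * c := (two_mul c).symm
  refine lt_of_mul_lt_mul_right (a := 2 ^ k.choose 2) ?_ (Nat.zero_le _)
  calc Nat.card {G : SimpleGraph V // ¬ G.CliqueFree k ∨ ¬ Gᶜ.CliqueFree k} * 2 ^ k.choose 2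
      ≤ 2 * (c * 2 ^ k.choose 2) := by grw [union_bound, mul_assoc]
    _ ≤ 2 * (Fintype.card V).choose k * 2 ^ (Fintype.card V).choose 2 := by
        grw [ncard_not_cliqueFree_mul_two_pow_le, mul_assoc]
    _ < 2 ^ k.choose 2 * 2 ^ (Fintype.card V).choose 2 := by gcongr
    _ = 2 ^ (Fintype.card V).choose 2 * 2 ^ k.choose 2 := mul_comm _ _

theorem count_ramsey_graphs_lt :
    Nat.card {G : SimpleGraph (Fin 10000000) //
        ¬ G.CliqueFree 51 ∨ ¬ Gᶜ.CliqueFree 51} <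
      2 ^ (10 ^ 7 * (10 ^ 7 - 1) / 2) := by
  have card_pairs : 10 ^ 7 * (10 ^ 7 - 1) / 2 = (Fintype.card (Fin 10000000)).choose 2 := by
    rw [Fintype.card_fin, Nat.choose_two_right]
    norm_num
  have card_le : Fintype.card (Fin 10000000) ≤ 2 ^ 24 := by simp
  rw [card_pairs]
  exact count_ramsey_graphs_lt_general (two_mul_choose_lt_two_pow_choose_two card_le (by decide))
end
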